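/- arXiv:1502.04912 — 3 statements merged into one kernel-verified Lean document; each statement's English description precedes it below -/
import Mathlib

section
/- For b, c, p ∈ ℂ with k = p + (b+2)/2 ∉ {0, −1, −2, …}, the entire function w(z) = N_{p,b,c}(z) = ∑_{n=0}^∞ (−c/4)^n z^n / ((3/2)_n (k)_n) satisfies the differential equation 4z²w″(z) + 2(2p+b+3)z·w′(z) + (cz + 2p + b)·w(z) = 2p + b for all z ∈ ℂ. -/
open Complex Set

noncomputable section

/-- The open unit disk in ℂ. -/
def unitDisk : Set ℂ := Metric.ball 0 1

/-- Pochhammer symbol `(x)_n = x (x+1) ⋯ (x+n-1)`. -/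
def poch (x : ℂ) (n : ℕ) : ℂ := ∏ i ∈ Finset.range n, (x + i)

/-- `k` is not a nonpositive integer `0, -1, -2, …`. -/
def NotNonposInt (k : ℂ) : Prop := ∀ n : ℕ, k ≠ -(n : ℂ)

/-- `a` is the coefficient sequence of a function `f(z) = z + ∑_{n≥2} a_n z^n`
in the class `A` of normalized analytic functions on the unit disk. -/
def InA (a : ℕ → ℂ) : Prop :=
  a 0 = 0 ∧ a 1 = 1 ∧ ∀ z ∈ unitDisk, Summable fun n => a n * z ^ n

/-- The generalized Struve convolution operator `S_k^c` applied to
`f(z) = z + ∑_{n≥2} a_n z^n`, namely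
`S_k^c f(z) = z + ∑_{n≥1} (-c/4)^n a_{n+1} z^{n+1} / ((3/2)_n (k)_n)`. -/
def struveOp (k c : ℂ) (a : ℕ → ℂ) (z : ℂ) : ℂ :=
  z + ∑' n : ℕ,
    (-c / 4) ^ (n + 1) / (poch (3 / 2) (n + 1) * poch k (n + 1)) * a (n + 2) * z ^ (n + 2)

/-- Subordination of analytic functions on the unit disk. -/
def Subord (f g : ℂ → ℂ) : Prop :=
  ∃ w : ℂ → ℂ, AnalyticOnNhd ℂ w unitDisk ∧ w 0 = 0 ∧ (∀ z ∈ unitDisk, ‖w z‖ < 1) ∧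
    ∀ z ∈ unitDisk, f z = g (w z)

/-- `(z / F z) ^ μ` (principal branch), with the removable singularity at `z = 0`
filled in with the value `1`. -/
def ratioPow (μ : ℝ) (F : ℂ → ℂ) (z : ℂ) : ℂ :=
  (if z = 0 then 1 else z / F z) ^ (μ : ℂ)

/-- `F z / G z`, with the removable singularity at `z = 0` filled in with value `1`. -/
def ratioQ (F G : ℂ → ℂ) (z : ℂ) : ℂ := if z = 0 then 1 else F z / G z

/-- The expression
`e^{iα} {(1+λ)(z/S_{k+1}f)^μ − λ (S_k f/S_{k+1} f)(z/S_{k+1} f)^μ}`. -/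
def Jfun (α : ℝ) (lam : ℂ) (μ : ℝ) (Sk Sk1 : ℂ → ℂ) (z : ℂ) : ℂ :=
  exp (α * I) * ((1 + lam) * ratioPow μ Sk1 z - lam * ratioQ Sk Sk1 z * ratioPow μ Sk1 z)

/-- Membership `f ∈ N_{k,c}^α(λ, μ, φ)` for `f(z) = z + ∑_{n≥2} a_n z^n`. -/
def memN (α : ℝ) (lam : ℂ) (μ : ℝ) (k c : ℂ) (φ : ℂ → ℂ) (a : ℕ → ℂ) : Prop :=
  Subord (Jfun α lam μ (struveOp k c a) (struveOp (k + 1) c a))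
    (fun z => (Real.cos α : ℂ) * φ z + (Real.sin α : ℂ) * I)

/-- `φ` is convex univalent on the unit disk. -/
def ConvexUnivalent (φ : ℂ → ℂ) : Prop :=
  AnalyticOnNhd ℂ φ unitDisk ∧ InjOn φ unitDisk ∧ Convex ℝ (φ '' unitDisk)

/-- `F z / z` is nonvanishing on the unit disk. -/
def Nonvan (F : ℂ → ℂ) : Prop := ∀ z ∈ unitDisk, z ≠ 0 → F z ≠ 0

/-- The Gaussian hypergeometric function `₂F₁(a,b,c;z)` (as a series). -/
def hyp2F1 (a b c z : ℂ) : ℂ :=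
  ∑' n : ℕ, poch a n * poch b n / (poch c n * (n.factorial : ℂ)) * z ^ n
/-- The normalized generalized Struve function `N_{p,b,c}`. -/
def NStruve (k c : ℂ) (z : ℂ) : ℂ :=
  ∑' n : ℕ, (-c / 4) ^ n / (poch (3 / 2) n * poch k n) * z ^ n


def scoef (k c : ℂ) (n : ℕ) : ℂ := (-c / 4) ^ n / (poch (3 / 2) n * poch k n)

lemma scoef_succ (k c : ℂ) (n : ℕ) :
    scoef k c (n + 1) = scoef k c n * ((-c / 4) / ((3 / 2 + n) * (k + n))) := by
  unfold scoef poch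
  rw [Finset.prod_range_succ, Finset.prod_range_succ, pow_succ, div_mul_div_comm]
  congr 1
  ring

lemma scoef_summable (k c z : ℂ) : Summable fun n => scoef k c n * z ^ n := by
  apply summable_of_ratio_norm_eventually_le (r := 1 / 2) (by norm_num)
  obtain ⟨N, hN⟩ := exists_nat_gt (‖k‖ + 2 * ‖(-c / 4) * z‖ + 1)
  filter_upwards [Filter.eventually_ge_atTop N] with n hn
  have hn' : (N : ℝ) ≤ n := by exact_mod_cast hn
  have h1 : (1 : ℝ) ≤ ‖(3 / 2 + n : ℂ)‖ := by
    have : (3 / 2 + n : ℂ) = ((3 / 2 + n : ℝ) : ℂ) := by push_cast; ring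
    rw [this, Complex.norm_real, Real.norm_eq_abs, abs_of_nonneg (by positivity)]
    have : (0 : ℝ) ≤ n := by positivity
    linarith
  have h2 : 2 * ‖(-c / 4) * z‖ + 1 ≤ ‖k + n‖ := by
    have h := norm_sub_le (k + n) k
    rw [add_sub_cancel_left, Complex.norm_natCast] at h
    linarith
  have e : scoef k c (n + 1) * z ^ (n + 1)
      = ((-c / 4) * z) / ((3 / 2 + n) * (k + n)) * (scoef k c n * z ^ n) := by
    rw [scoef_succ, pow_succ]; ring
  rw [e, norm_mul]
  apply mul_le_mul_of_nonneg_right _ (norm_nonneg _)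
  rw [norm_div, norm_mul (3 / 2 + (n : ℂ))]
  have h0 := norm_nonneg ((-c / 4) * z)
  rw [div_le_iff₀ (by nlinarith)]
  nlinarith

lemma deriv_summable (a : ℕ → ℂ) (ha : ∀ z : ℂ, Summable fun n => a n * z ^ n) (R : ℝ) (hR : 0 ≤ R) :
    Summable fun n : ℕ => ‖a n‖ * (n * R ^ (n - 1)) := by
  have h := (ha ((2 * (R + 1) : ℝ) : ℂ)).norm
  refine Summable.of_nonneg_of_le (fun n => by positivity) (fun n => ?_) h
  rw [norm_mul, norm_pow, Complex.norm_real, Real.norm_eq_abs, abs_of_nonneg (by positivity), mul_pow]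
  gcongr
  · exact_mod_cast n.lt_two_pow_self.le
  · calc R ^ (n - 1) ≤ (R + 1) ^ (n - 1) := by gcongr; linarith
      _ ≤ (R + 1) ^ n := pow_le_pow_right₀ (by linarith) (by omega)

lemma series_hasDerivAt (a : ℕ → ℂ) (ha : ∀ z : ℂ, Summable fun n => a n * z ^ n) (z : ℂ) :
    HasDerivAt (fun z => ∑' n, a n * z ^ n) (∑' n : ℕ, a n * (n * z ^ (n - 1))) z := by
  have hR : (0 : ℝ) ≤ ‖z‖ + 1 := by positivity
  refine hasDerivAt_tsum_of_isPreconnected (deriv_summable a ha (‖z‖ + 1) hR) Metric.isOpen_ball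
    (t := Metric.ball (0 : ℂ) (‖z‖ + 1))
    (convex_ball _ _).isPreconnected (fun n y _ => (hasDerivAt_pow n y).const_mul (a n)) ?_
    (y₀ := 0) (by simp; positivity) (ha 0) (by simp)
  intro n y hy
  have hy' : ‖y‖ ≤ ‖z‖ + 1 := by simpa using (mem_ball_zero_iff.1 hy).le
  rw [norm_mul, norm_mul, norm_pow, Complex.norm_natCast]
  gcongr

lemma deriv_term_summable (a : ℕ → ℂ) (ha : ∀ z : ℂ, Summable fun n => a n * z ^ n) (z : ℂ) :
    Summable fun n : ℕ => a n * (n * z ^ (n - 1)) := by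
  apply Summable.of_norm
  simpa [norm_mul, norm_pow] using deriv_summable a ha ‖z‖ (norm_nonneg _)

lemma shift_tsum (a : ℕ → ℂ) (ha : ∀ z : ℂ, Summable fun n => a n * z ^ n) (z : ℂ) :
    HasSum (fun n : ℕ => (a (n + 1) * (n + 1 : ℕ)) * z ^ n) (∑' n : ℕ, a n * (n * z ^ (n - 1))) := by
  have h := (hasSum_nat_add_iff' 1).2 (deriv_term_summable a ha z).hasSum
  simpa [mul_assoc] using h

/-- `w = N_{p,b,c}` satisfies
`4z²w'' + 2(2p+b+3)z w' + (cz+2p+b) w = 2p+b` on all of ℂ. -/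
theorem struve_ode (p b c k : ℂ) (hk : k = p + (b + 2) / 2) (hknp : NotNonposInt k) :
    ∀ z : ℂ,
      4 * z ^ 2 * iteratedDeriv 2 (NStruve k c) z
          + 2 * (2 * p + b + 3) * z * deriv (NStruve k c) z
          + (c * z + 2 * p + b) * NStruve k c z
        = 2 * p + b := by
  intro z
  set a := scoef k c with ha_def
  have ha : ∀ z : ℂ, Summable fun n => a n * z ^ n := scoef_summable k c
  set d : ℕ → ℂ := fun n => a (n + 1) * (n + 1 : ℕ) with hd
  have hds : ∀ z : ℂ, Summable fun n => d n * z ^ n := fun z => (shift_tsum a ha z).summable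
  have hN : NStruve k c = fun z => ∑' n, a n * z ^ n := rfl
  have hD : deriv (NStruve k c) = fun z => ∑' n, d n * z ^ n := by
    funext y
    rw [hN, (series_hasDerivAt a ha y).deriv, (shift_tsum a ha y).tsum_eq]
  have hDD : iteratedDeriv 2 (NStruve k c) z = ∑' n : ℕ, d n * (n * z ^ (n - 1)) := by
    rw [iteratedDeriv_succ, iteratedDeriv_one, hD, (series_hasDerivAt d hds z).deriv]
  have h2 : HasSum (fun n : ℕ => d n * (n * z ^ (n - 1))) (iteratedDeriv 2 (NStruve k c) z) :=
    hDD ▸ (deriv_term_summable d hds z).hasSum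
  have h1 : HasSum (fun n : ℕ => d n * z ^ n) (deriv (NStruve k c) z) := by
    rw [hD]; exact (hds z).hasSum
  have h0 : HasSum (fun n : ℕ => a n * z ^ n) (NStruve k c z) := (ha z).hasSum
  have h0' : HasSum (fun n : ℕ => a (n + 1) * z ^ (n + 1)) (NStruve k c z - 1) := by
    have h := (hasSum_nat_add_iff' 1).2 h0
    simpa [ha_def, scoef, poch] using h
  have key := ((h2.mul_left (4 * z ^ 2)).add (h1.mul_left (2 * (2 * p + b + 3) * z))).add
    ((h0'.mul_left (2 * p + b)).add (h0.mul_left (c * z)))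
  have hz : ∀ n : ℕ, 4 * z ^ 2 * (d n * (n * z ^ (n - 1))) + 2 * (2 * p + b + 3) * z * (d n * z ^ n)
      + ((2 * p + b) * (a (n + 1) * z ^ (n + 1)) + c * z * (a n * z ^ n)) = 0 := by
    intro n
    have hp : (n : ℂ) * z ^ (n - 1) * z = n * z ^ n := by
      cases n with
      | zero => simp
      | succ m => rw [Nat.add_sub_cancel, pow_succ]; ring
    have hk0 : k + n ≠ 0 := fun h => hknp n (eq_neg_of_add_eq_zero_left h)
    have h3 : (3 / 2 + n : ℂ) ≠ 0 := by
      have : (3 / 2 + n : ℂ) = ((3 / 2 + n : ℝ) : ℂ) := by push_cast; ring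
      rw [this]
      exact_mod_cast (by positivity : (3 / 2 + n : ℝ) ≠ 0)
    have hr : a (n + 1) * ((3 / 2 + n) * (k + n)) = a n * (-c / 4) := by
      rw [ha_def, scoef_succ, mul_assoc, div_mul_cancel₀ _ (mul_ne_zero h3 hk0)]
    rw [hk] at hr
    simp only [hd]
    push_cast
    linear_combination (4 * z * a (n + 1) * (n + 1)) * hp + 4 * z ^ (n + 1) * hr
  simp only [hz] at key
  have := key.unique hasSum_zero
  linear_combination this
end
end

section
/- Let 0 < μ < 1, k = p + (b+2)/2 ∉ {0, −1, −2, …} with Re(μk) ≥ 0, let φ be convex univalent on E with φ(0) = 1, and let 0 ≤ λ₁ < λ₂ be real. Then N_{k,c}^0(λ₂, μ, φ) ⊆ N_{k,c}^0(λ₁, μ, φ). -/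
open Complex Set

noncomputable section

open Filter Topology

lemma aux_disk_open : IsOpen unitDisk := Metric.isOpen_ball

lemma aux_disk_preconn : IsPreconnected unitDisk := (convex_ball (0 : ℂ) 1).isPreconnected

lemma aux_zero_mem : (0 : ℂ) ∈ unitDisk := by simp [unitDisk]

/-- Power jump across the negative axis. -/
lemma aux_jump (μ : ℝ) (h0 : 0 < μ) (h1 : μ < 1) (x : ℂ) (hre : x.re < 0) (him : x.im = 0)
    (hc : ContinuousAt (fun y : ℂ => y ^ (μ : ℂ)) x) : False := by
  have hx : x ≠ 0 := by rintro rfl; simp at hre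
  have e1 : ∀ᶠ y in 𝓝 x, y ^ (μ : ℂ) = exp (log y * μ) := by
    filter_upwards [isOpen_ne.mem_nhds hx] with y hy
    rw [cpow_def_of_ne_zero hy]
  have hc' : Tendsto (fun y : ℂ => exp (log y * μ)) (𝓝 x) (𝓝 (x ^ (μ : ℂ))) :=
    hc.tendsto.congr' e1
  have t1 := (Complex.continuous_exp.tendsto _).comp
    ((tendsto_log_nhdsWithin_im_neg_of_re_neg_of_im_zero hre him).mul_const (μ : ℂ))
  have t2 := (Complex.continuous_exp.tendsto _).comp
    ((tendsto_log_nhdsWithin_im_nonneg_of_re_neg_of_im_zero hre him).mul_const (μ : ℂ))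
  have n1 : (𝓝[{ z : ℂ | z.im < 0 }] x).NeBot := by
    rw [← mem_closure_iff_nhdsWithin_neBot, Complex.closure_setOfPred_im_lt]
    simp [him]
  have n2 : (𝓝[{ z : ℂ | 0 ≤ z.im }] x).NeBot := by
    rw [← mem_closure_iff_nhdsWithin_neBot]
    exact subset_closure (by simp [him])
  have u1 := tendsto_nhds_unique t1 (hc'.mono_left nhdsWithin_le_nhds)
  have u2 := tendsto_nhds_unique t2 (hc'.mono_left nhdsWithin_le_nhds)
  have u := u1.trans u2.symm
  rw [Complex.exp_eq_exp_iff_exists_int] at u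
  obtain ⟨n, hn⟩ := u
  have hn2 := congrArg Complex.im hn
  simp at hn2
  have hpi := Real.pi_pos
  have h3 : (n : ℝ) = -μ := by
    have : Real.pi * ((n : ℝ) + μ) = 0 := by linarith
    rcases mul_eq_zero.1 this with h | h
    · exact absurd h hpi.ne'
    · linarith
  have h4 : (-1 : ℝ) < n := by linarith
  have h5 : (n : ℝ) < 0 := by linarith
  have h6 : (-1 : ℤ) < n := by exact_mod_cast h4
  have h7 : n < (0 : ℤ) := by exact_mod_cast h5
  omega

lemma aux_slit (μ : ℝ) (h0 : 0 < μ) (h1 : μ < 1) (G M P : ℂ → ℂ)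
    (hG : AnalyticOnNhd ℂ G unitDisk) (hM : AnalyticOnNhd ℂ M unitDisk)
    (hG0 : G 0 = 1) (hM0 : M 0 = 1) (hP : ContinuousOn P unitDisk)
    (h : ∀ z ∈ unitDisk, P z = M z / G z * (G z)⁻¹ ^ (μ : ℂ)) :
    ∀ z ∈ unitDisk, G z ∈ slitPlane := by
  intro z0 hz0
  by_contra hcon
  have hopen : ∀ z ∈ unitDisk, 𝓝 (G z) ≤ map G (𝓝 z) := by
    intro z hz
    refine (hG z hz).eventually_constant_or_nhds_le_map_nhds.resolve_left fun hc => ?_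
    have hE := hG.eqOn_of_preconnected_of_eventuallyEq (g := fun _ => G z) analyticOnNhd_const
      aux_disk_preconn hz hc
    apply hcon
    have e1 := hE hz0
    have e2 := hE aux_zero_mem
    simp only at e1 e2
    rw [e1, ← e2, hG0]
    exact one_mem_slitPlane
  have hMne : ∀ᶠ z in 𝓝[≠] z0, M z ≠ 0 := by
    by_contra hfr
    have hfr' : ∃ᶠ z in 𝓝[≠] z0, M z = 0 := hfr
    have := hM.eqOn_zero_of_preconnected_of_frequently_eq_zero aux_disk_preconn hz0
      hfr'
    have e := this aux_zero_mem
    rw [hM0] at e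
    simp at e
  rw [eventually_nhdsWithin_iff] at hMne
  have hV : {z | z ∈ unitDisk ∧ (z ∈ ({z0}ᶜ : Set ℂ) → M z ≠ 0)} ∈ 𝓝 z0 :=
    inter_mem (aux_disk_open.mem_nhds hz0) hMne
  have hGV := hopen z0 hz0 (image_mem_map hV)
  have hre : (G z0).re ≤ 0 ∧ (G z0).im = 0 := by
    rw [mem_slitPlane_iff] at hcon
    push Not at hcon
    exact hcon
  have ht : Tendsto (fun t : ℝ => G z0 - (t : ℂ)) (𝓝[>] 0) (𝓝 (G z0)) := by
    have : Continuous (fun t : ℝ => G z0 - (t : ℂ)) := by fun_prop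
    have := this.tendsto 0
    simp only [ofReal_zero, sub_zero] at this
    exact this.mono_left nhdsWithin_le_nhds
  obtain ⟨t, ⟨z1, ⟨hz1, hz1M⟩, hz1G⟩, htpos⟩ :=
    ((ht.eventually hGV).and self_mem_nhdsWithin).exists
  have htpos : 0 < t := htpos
  have hne : z1 ≠ z0 := by
    rintro rfl
    have : (t : ℂ) = 0 := by linear_combination hz1G
    exact htpos.ne' (by exact_mod_cast this)
  have hM1 := hz1M hne
  have hGre : (G z1).re < 0 := by rw [hz1G]; simp; linarith [hre.1]
  have hGim : (G z1).im = 0 := by rw [hz1G]; simp [hre.2]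
  have hG1 : G z1 ≠ 0 := by intro hh; rw [hh] at hGre; simp at hGre
  have hGc := (hG z1 hz1).continuousAt
  have hMc := (hM z1 hz1).continuousAt
  have hPc : ContinuousAt P z1 := hP.continuousAt (aux_disk_open.mem_nhds hz1)
  have hcont : ContinuousAt (fun z => P z * G z / M z) z1 := (hPc.mul hGc).div hMc hM1
  have hcont2 : ContinuousAt (fun z => (G z)⁻¹ ^ (μ : ℂ)) z1 := by
    refine hcont.congr ?_
    filter_upwards [aux_disk_open.mem_nhds hz1, hGc.eventually_ne hG1, hMc.eventually_ne hM1]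
      with z a b c
    rw [h z a]
    field_simp
  have hcont3 : ContinuousAt (fun y : ℂ => y⁻¹ ^ (μ : ℂ)) (G z1) := by
    have : Tendsto (fun y : ℂ => y⁻¹ ^ (μ : ℂ)) (map G (𝓝 z1)) (𝓝 ((G z1)⁻¹ ^ (μ : ℂ))) := by
      rw [tendsto_map'_iff]
      exact hcont2
    exact this.mono_left (hopen z1 hz1)
  have hcont4 : ContinuousAt (fun y : ℂ => y ^ (μ : ℂ)) (G z1)⁻¹ := by
    have hi : ContinuousAt (fun y : ℂ => y⁻¹) (G z1)⁻¹ := continuousAt_inv₀ (inv_ne_zero hG1)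
    have := ContinuousAt.comp (f := fun y : ℂ => y⁻¹) (x := (G z1)⁻¹)
      (g := fun y : ℂ => y⁻¹ ^ (μ : ℂ)) (by simpa using hcont3) hi
    simpa [Function.comp_def] using this
  refine aux_jump μ h0 h1 _ ?_ ?_ hcont4
  · rw [inv_re]
    exact div_neg_of_neg_of_pos hGre (normSq_pos.2 hG1)
  · rw [inv_im, hGim]; simp

/-- Hallenbeck and Ruscheweyh lemma. -/
lemma aux_HR (p : ℂ → ℂ) (hp : AnalyticOnNhd ℂ p unitDisk) (δ : ℂ) (hδ : 0 ≤ δ.re)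
    (Ω : Set ℂ) (hΩ : Convex ℝ Ω) (hΩo : IsOpen Ω)
    (hq : ∀ z ∈ unitDisk, p z + δ * (z * deriv p z) ∈ Ω) :
    ∀ z ∈ unitDisk, p z ∈ Ω := by
  intro z1 hz1
  by_contra hcon
  obtain ⟨f, hf⟩ := RCLike.geometric_hahn_banach_open_point (𝕜 := ℂ) hΩ hΩo hcon
  set b := f 1 with hb
  have hfb : ∀ a, f a = b * a := by
    intro a
    have := f.map_smul a 1
    simp only [smul_eq_mul, mul_one] at this
    rw [this, mul_comm]
  simp only [hfb, RCLike.re_to_complex] at hf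
  have hz1' : ‖z1‖ < 1 := by simpa [unitDisk] using hz1
  have hsub : Metric.closedBall (0 : ℂ) ‖z1‖ ⊆ unitDisk := Metric.closedBall_subset_ball hz1'
  have hcont : ContinuousOn (fun z => (b * p z).re) (Metric.closedBall 0 ‖z1‖) := by
    have := hp.continuousOn.mono hsub
    exact Complex.continuous_re.comp_continuousOn (continuousOn_const.mul this)
  obtain ⟨z0, hz0, hmax⟩ := (isCompact_closedBall (0 : ℂ) ‖z1‖).exists_isMaxOn
    ⟨z1, by simp⟩ hcont
  have hz0' : ‖z0‖ ≤ ‖z1‖ := by simpa using hz0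
  set D := b * (z0 * deriv p z0) with hD
  have key : ∀ ζ : ℂ, ζ.re ≤ 0 → (D * ζ).re ≤ 0 := by
    intro ζ hζ
    have hder : HasDerivAt (fun t : ℂ => b * p (z0 * exp (t * ζ))) (D * ζ) ((0 : ℝ) : ℂ) := by
      have h1 : HasDerivAt (fun t : ℂ => z0 * exp (t * ζ)) (z0 * ζ) ((0 : ℝ) : ℂ) := by
        have := (((hasDerivAt_id ((0 : ℝ) : ℂ)).mul_const ζ).cexp).const_mul z0
        simpa using this
      have h2 : HasDerivAt p (deriv p z0) (z0 * exp (((0 : ℝ) : ℂ) * ζ)) := by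
        simpa using (hp z0 (hsub hz0)).differentiableAt.hasDerivAt
      have h3 := (HasDerivAt.comp (h := fun t : ℂ => z0 * exp (t * ζ)) (h₂ := p) _ h2 h1).const_mul b
      have e : D * ζ = b * (deriv p z0 * (z0 * ζ)) := by rw [hD]; ring
      rw [e]
      exact h3
    have hr := hder.real_of_complex
    have hs := (hasDerivAt_iff_tendsto_slope.1 hr).mono_left
      (nhdsWithin_mono 0 (fun t (ht : t ∈ Ioi (0 : ℝ)) => (ne_of_gt ht : t ≠ 0)))
    refine le_of_tendsto hs ?_
    filter_upwards [self_mem_nhdsWithin] with t ht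
    have ht : 0 < t := ht
    rw [slope_def_field]
    apply div_nonpos_of_nonpos_of_nonneg
    · have hm : z0 * exp (t * ζ) ∈ Metric.closedBall (0 : ℂ) ‖z1‖ := by
        simp only [mem_closedBall_zero_iff, norm_mul, norm_exp]
        have : Real.exp ((t * ζ : ℂ).re) ≤ 1 := by
          rw [Real.exp_le_one_iff]
          simp only [re_ofReal_mul]
          exact mul_nonpos_of_nonneg_of_nonpos ht.le hζ
        calc _ ≤ ‖z0‖ * 1 := by gcongr
          _ ≤ _ := by simpa using hz0'
      have := hmax hm
      simp only [mem_ofPred_eq] at this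
      simpa using this
    · linarith
  have k1 := key I (by simp)
  have k2 := key (-I) (by simp)
  have k3 := key (-1) (by simp)
  simp at k1 k2 k3
  have him : D.im = 0 := le_antisymm k2 k1
  have h1 := hf _ (hq z0 (hsub hz0))
  have h2 : (b * p z1).re ≤ (b * p z0).re := hmax (by simp : z1 ∈ Metric.closedBall (0:ℂ) ‖z1‖)
  have h3 : b * (p z0 + δ * (z0 * deriv p z0)) = b * p z0 + δ * D := by rw [hD]; ring
  rw [h3, add_re, mul_re δ D, him] at h1
  have := mul_nonneg hδ k3
  linarith

lemma aux_image_open (φ : ℂ → ℂ) (hφ : AnalyticOnNhd ℂ φ unitDisk) (hinj : InjOn φ unitDisk) :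
    ∀ s ⊆ unitDisk, IsOpen s → IsOpen (φ '' s) := by
  refine (hφ.is_constant_or_isOpen aux_disk_preconn).resolve_left ?_
  rintro ⟨w, hw⟩
  have h2 : (1 / 2 : ℂ) ∈ unitDisk := by simp [unitDisk]; norm_num
  have := hinj aux_zero_mem h2 (by rw [hw _ aux_zero_mem, hw _ h2])
  norm_num at this

lemma aux_inv (φ : ℂ → ℂ) (hφ : AnalyticOnNhd ℂ φ unitDisk) (hinj : InjOn φ unitDisk) :
    AnalyticOnNhd ℂ (Function.invFunOn φ unitDisk) (φ '' unitDisk) := by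
  set ψ := Function.invFunOn φ unitDisk with hψ
  have hop := aux_image_open φ hφ hinj
  have hΩ := hop _ subset_rfl aux_disk_open
  have hl : ∀ z ∈ unitDisk, ψ (φ z) = z := fun z hz => hinj.leftInvOn_invFunOn hz
  have hr : ∀ y ∈ φ '' unitDisk, φ (ψ y) = y := fun y hy => Function.invFunOn_eq hy
  have hm : ∀ y ∈ φ '' unitDisk, ψ y ∈ unitDisk := fun y hy => Function.invFunOn_mem hy
  have hc : ∀ y ∈ φ '' unitDisk, ContinuousAt ψ y := by
    rintro _ ⟨z, hz, rfl⟩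
    rw [ContinuousAt, hl z hz, tendsto_def]
    intro s hs
    obtain ⟨t, hts, hto, hzt⟩ := mem_nhds_iff.1 (inter_mem hs (aux_disk_open.mem_nhds hz))
    refine mem_of_superset ((hop t (fun x hx => (hts hx).2) hto).mem_nhds ⟨z, hzt, rfl⟩) ?_
    rintro _ ⟨x, hx, rfl⟩
    simp only [mem_preimage]
    rw [hl x (hts hx).2]
    exact (hts hx).1
  rintro y0 hy0
  have hz0 := hm y0 hy0
  apply analyticAt_of_differentiable_on_punctured_nhds_of_continuousAt _ (hc y0 hy0)
  have hd : ∀ᶠ z in 𝓝[≠] (ψ y0), deriv φ z ≠ 0 := by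
    rcases (hφ.deriv (ψ y0) hz0).eventually_eq_zero_or_eventually_ne_zero with h | h
    · exfalso
      have hE := hφ.deriv.eqOn_zero_of_preconnected_of_eventuallyEq_zero aux_disk_preconn hz0 h
      have h2 : (1 / 2 : ℂ) ∈ unitDisk := by simp [unitDisk]; norm_num
      have := aux_disk_open.is_const_of_deriv_eq_zero aux_disk_preconn hφ.differentiableOn hE
        aux_zero_mem h2
      have := hinj aux_zero_mem h2 this
      norm_num at this
    · exact h
  rw [eventually_nhdsWithin_iff] at hd ⊢
  filter_upwards [(hc y0 hy0).eventually hd, hΩ.mem_nhds hy0] with y h1 hy hne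
  have hne' : ψ y ∈ ({ψ y0}ᶜ : Set ℂ) := by
    intro hh
    apply hne
    have hh : ψ y = ψ y0 := hh
    have := congrArg φ hh
    rwa [hr y hy, hr y0 hy0] at this
  refine (HasDerivAt.of_local_left_inverse (hc y hy)
    (hφ _ (hm y hy)).differentiableAt.hasDerivAt (h1 hne') ?_).differentiableAt
  filter_upwards [hΩ.mem_nhds hy] with x hx using hr x hx

/-- Coefficients -/
def auxD (κ c : ℂ) (a : ℕ → ℂ) (n : ℕ) : ℂ :=
  (-c / 4) ^ n / (poch (3 / 2) n * poch κ n) * a (n + 1)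

def auxG (κ c : ℂ) (a : ℕ → ℂ) (z : ℂ) : ℂ := ∑' n : ℕ, auxD κ c a n * z ^ n

lemma aux_summable_e (κ c : ℂ) :
    Summable fun n : ℕ => (-c / 4) ^ n / (poch (3 / 2) n * poch κ n) := by
  refine summable_of_ratio_norm_eventually_le (r := 1 / 2) (by norm_num) ?_
  have hn := tendsto_natCast_atTop_atTop (R := ℝ)
  filter_upwards [hn.eventually_ge_atTop (‖κ‖ + 1), hn.eventually_ge_atTop ‖c‖] with n h1 h2
  have e : (-c / 4) ^ (n + 1) / (poch (3 / 2) (n + 1) * poch κ (n + 1)) =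
      (-c / 4 / ((3 / 2 + n) * (κ + n))) * ((-c / 4) ^ n / (poch (3 / 2) n * poch κ n)) := by
    simp only [poch, Finset.prod_range_succ, pow_succ]
    rw [div_mul_div_comm]
    congr 1 <;> ring
  rw [e, norm_mul]
  gcongr
  have a1 : 1 ≤ ‖κ + n‖ := by
    have := norm_sub_norm_le (n : ℂ) (-κ)
    simp only [norm_neg, sub_neg_eq_add, Complex.norm_natCast] at this
    rw [add_comm]; linarith
  have a2 : (n : ℝ) ≤ ‖(3 / 2 + n : ℂ)‖ := by
    have := Complex.re_le_norm (3 / 2 + n : ℂ)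
    simp at this
    linarith
  have a3 : (1 : ℝ) ≤ n := by linarith [norm_nonneg κ]
  rw [norm_div, norm_mul, norm_div, norm_neg]
  rw [div_le_iff₀ (by nlinarith)]
  simp only [Complex.norm_ofNat]
  nlinarith

lemma aux_summable_D (κ c : ℂ) (a : ℕ → ℂ) (ha : InA a) (ρ : ℝ) (h0 : 0 < ρ) (h1 : ρ < 1) :
    Summable fun n : ℕ => ‖auxD κ c a n‖ * ρ ^ n := by
  have hs := ha.2.2 (ρ : ℂ) (by simp [unitDisk, abs_of_pos h0, h1])
  have hs' := ((summable_nat_add_iff 1).2 hs).tendsto_atTop_zero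
  obtain ⟨C, hC⟩ := (Metric.isBounded_range_of_tendsto _ hs').exists_norm_le
  have hC' : ∀ n, ‖a (n + 1)‖ * ρ ^ (n + 1) ≤ C := by
    intro n
    have := hC _ (mem_range_self n)
    simpa [abs_of_pos h0] using this
  refine Summable.of_nonneg_of_le (fun n => by positivity) (fun n => ?_)
    ((aux_summable_e κ c).norm.mul_right (C / ρ))
  rw [auxD, norm_mul, mul_assoc]
  gcongr
  rw [le_div_iff₀ h0]
  have := hC' n
  rw [pow_succ] at this
  linarith

lemma aux_rho (z : ℂ) (hz : z ∈ unitDisk) : ∃ ρ : ℝ, 0 < ρ ∧ ρ < 1 ∧ z ∈ Metric.ball (0 : ℂ) ρ := by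
  have hz1' : ‖z‖ < 1 := by simpa [unitDisk] using hz
  obtain ⟨ρ, h1, h2⟩ := exists_between hz1'
  exact ⟨ρ, (norm_nonneg z).trans_lt h1, h2, by simpa using h1⟩

lemma aux_bd (κ c : ℂ) (a : ℕ → ℂ) (ρ : ℝ) :
    ∀ (n : ℕ) (w : ℂ), w ∈ Metric.ball (0 : ℂ) ρ →
      ‖auxD κ c a n * w ^ n‖ ≤ ‖auxD κ c a n‖ * ρ ^ n := by
  intro n w hw
  have : ‖w‖ < ρ := by simpa using hw
  rw [norm_mul, norm_pow]
  gcongr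

lemma aux_sumz (κ c : ℂ) (a : ℕ → ℂ) (ha : InA a) (z : ℂ) (hz : z ∈ unitDisk) :
    Summable fun n : ℕ => auxD κ c a n * z ^ n := by
  obtain ⟨ρ, h0, h1, hzρ⟩ := aux_rho z hz
  exact Summable.of_norm_bounded (aux_summable_D κ c a ha ρ h0 h1)
    (fun n => aux_bd κ c a ρ n z hzρ)

lemma aux_G_an (κ c : ℂ) (a : ℕ → ℂ) (ha : InA a) : AnalyticOnNhd ℂ (auxG κ c a) unitDisk := by
  intro z hz
  obtain ⟨ρ, h0, h1, hzρ⟩ := aux_rho z hz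
  have := Complex.differentiableOn_tsum_of_summable_norm (aux_summable_D κ c a ha ρ h0 h1)
    (fun n => by fun_prop) Metric.isOpen_ball (aux_bd κ c a ρ)
  exact this.analyticAt (Metric.isOpen_ball.mem_nhds hzρ)

lemma aux_G_deriv (κ c : ℂ) (a : ℕ → ℂ) (ha : InA a) (z : ℂ) (hz : z ∈ unitDisk) :
    HasSum (fun n : ℕ => (n : ℂ) * (auxD κ c a n * z ^ n)) (z * deriv (auxG κ c a) z) := by
  obtain ⟨ρ, h0, h1, hzρ⟩ := aux_rho z hz
  have := Complex.hasSum_deriv_of_summable_norm (aux_summable_D κ c a ha ρ h0 h1)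
    (fun n => by fun_prop) Metric.isOpen_ball (aux_bd κ c a ρ) hzρ
  refine (this.mul_left z).congr_fun ?_
  intro n
  rcases n with _ | n
  · simp
  · simp
    ring

lemma aux_D_zero (κ c : ℂ) (a : ℕ → ℂ) (ha : InA a) : auxD κ c a 0 = 1 := by
  simp [auxD, poch, ha.2.1]

lemma aux_G_zero (κ c : ℂ) (a : ℕ → ℂ) (ha : InA a) : auxG κ c a 0 = 1 := by
  rw [auxG, tsum_eq_single 0]
  · simp [aux_D_zero κ c a ha]
  · intro n hn; simp [hn]

lemma aux_S_eq (κ c : ℂ) (a : ℕ → ℂ) (ha : InA a) (z : ℂ) (hz : z ∈ unitDisk) :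
    struveOp κ c a z = z * auxG κ c a z := by
  rw [auxG, (aux_sumz κ c a ha z hz).tsum_eq_zero_add, aux_D_zero κ c a ha, struveOp, mul_add,
    ← tsum_mul_left]
  congr 1
  · simp
  · congr 1
    ext n
    simp only [auxD]
    ring

lemma aux_D_rel (k c : ℂ) (hk : NotNonposInt k) (a : ℕ → ℂ) (n : ℕ) :
    k * auxD k c a n = (k + n) * auxD (k + 1) c a n := by
  have hne : ∀ m : ℕ, k + m ≠ 0 := fun m h => hk m (eq_neg_of_add_eq_zero_left h)
  have hk0 : k ≠ 0 := by simpa using hne 0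
  have hp : poch k n * (k + n) = k * poch (k + 1) n := by
    have e1 : poch k (n + 1) = poch k n * (k + n) := by simp [poch, Finset.prod_range_succ]
    rw [← e1, poch, Finset.prod_range_succ']
    simp only [poch, Nat.cast_zero, add_zero]
    rw [mul_comm]
    congr 1
    refine Finset.prod_congr rfl fun i _ => ?_
    push_cast; ring
  have hp1 : poch k n ≠ 0 := Finset.prod_ne_zero_iff.2 fun i _ => hne i
  have hp2 : poch (k + 1) n ≠ 0 := by
    intro h
    rw [h, mul_zero] at hp
    exact mul_ne_zero hp1 (hne n) hp
  have h3 : (poch k n)⁻¹ * k = (k + n) * (poch (k + 1) n)⁻¹ := by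
    field_simp
    linear_combination -hp
  simp only [auxD, div_eq_mul_inv, mul_inv]
  linear_combination (-c * 4⁻¹) ^ n * (poch (3 * 2⁻¹) n)⁻¹ * a (n + 1) * h3

lemma aux_G_rel (k c : ℂ) (hk : NotNonposInt k) (a : ℕ → ℂ) (ha : InA a) (z : ℂ)
    (hz : z ∈ unitDisk) :
    z * deriv (auxG (k + 1) c a) z = k * (auxG k c a z - auxG (k + 1) c a z) := by
  have h1 := aux_G_deriv (k + 1) c a ha z hz
  have h2 := (aux_sumz k c a ha z hz).hasSum.mul_left k
  have h3 := (aux_sumz (k + 1) c a ha z hz).hasSum.mul_left k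
  have h4 := h2.sub h3
  have := h1.unique (h4.congr_fun fun n => by
    linear_combination (-z ^ n) * aux_D_rel k c hk a n)
  rw [this, auxG, auxG]; ring

lemma aux_J (lam : ℂ) (μ : ℝ) (k c : ℂ) (a : ℕ → ℂ) (ha : InA a) (z : ℂ) (hz : z ∈ unitDisk) :
    Jfun 0 lam μ (struveOp k c a) (struveOp (k + 1) c a) z =
      (1 + lam - lam * (auxG k c a z / auxG (k + 1) c a z)) *
        (auxG (k + 1) c a z)⁻¹ ^ (μ : ℂ) := by
  have h1 : ratioPow μ (struveOp (k + 1) c a) z = (auxG (k + 1) c a z)⁻¹ ^ (μ : ℂ) := by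
    rw [ratioPow]
    congr 1
    split_ifs with h
    · rw [h, aux_G_zero _ _ _ ha]; simp
    · rw [aux_S_eq _ _ _ ha z hz, ← div_div, div_self h, one_div]
  have h2 : ratioQ (struveOp k c a) (struveOp (k + 1) c a) z =
      auxG k c a z / auxG (k + 1) c a z := by
    rw [ratioQ]
    split_ifs with h
    · rw [h, aux_G_zero _ _ _ ha, aux_G_zero _ _ _ ha]; simp
    · rw [aux_S_eq _ _ _ ha z hz, aux_S_eq _ _ _ ha z hz, mul_div_mul_left _ _ h]
  rw [Jfun, h1, h2]
  simp
  ring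

/-- the inclusion `N_{k,c}^0(λ₂, μ, φ) ⊆ N_{k,c}^0(λ₁, μ, φ)`
for `0 ≤ λ₁ < λ₂`. -/
theorem classN_inclusion (μ : ℝ) (k c : ℂ) (φ : ℂ → ℂ) (lam₁ lam₂ : ℝ)
    (hμ0 : 0 < μ) (hμ1 : μ < 1)
    (hk : NotNonposInt k) (hre : 0 ≤ ((μ : ℂ) * k).re)
    (hφ : ConvexUnivalent φ) (hφ0 : φ 0 = 1)
    (hlam1 : 0 ≤ lam₁) (hlam12 : lam₁ < lam₂) :
    ∀ a : ℕ → ℂ, InA a →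
      memN 0 (lam₂ : ℂ) μ k c φ a → memN 0 (lam₁ : ℂ) μ k c φ a := by
  intro a ha hmem
  obtain ⟨hφa, hφi, hφc⟩ := hφ
  have hlam2 : 0 < lam₂ := lt_of_le_of_lt hlam1 hlam12
  obtain ⟨w, hwa, hw0, hw1, hw⟩ := hmem
  have hk0 : k ≠ 0 := by simpa using hk 0
  have hwm : ∀ z ∈ unitDisk, w z ∈ unitDisk := fun z hz => by simpa [unitDisk] using hw1 z hz
  set G := auxG (k + 1) c a with hGdef
  set H := auxG k c a with hHdef
  have hGa : AnalyticOnNhd ℂ G unitDisk := aux_G_an _ _ _ ha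
  have hHa : AnalyticOnNhd ℂ H unitDisk := aux_G_an _ _ _ ha
  have hG0 : G 0 = 1 := aux_G_zero _ _ _ ha
  have hH0 : H 0 = 1 := aux_G_zero _ _ _ ha
  have hJ2 : ∀ z ∈ unitDisk, (1 + (lam₂ : ℂ) - lam₂ * (H z / G z)) * (G z)⁻¹ ^ (μ : ℂ) =
      φ (w z) := by
    intro z hz
    rw [← aux_J _ _ _ _ _ ha z hz, hw z hz]
    simp
  have hμC : (μ : ℂ) ≠ 0 := by exact_mod_cast hμ0.ne'
  have hslit : ∀ z ∈ unitDisk, G z ∈ slitPlane := by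
    refine aux_slit μ hμ0 hμ1 G (fun z => G z - lam₂ * (H z - G z)) (fun z => φ (w z)) hGa
      ?_ hG0 ?_ ?_ ?_
    · exact hGa.sub (analyticOnNhd_const.mul (hHa.sub hGa))
    · simp [hG0, hH0]
    · exact hφa.continuousOn.comp hwa.continuousOn hwm
    · intro z hz
      rw [← hJ2 z hz]
      by_cases h : G z = 0
      · simp [h, hμC]
      · congr 1
        field_simp
        ring
  have hGne : ∀ z ∈ unitDisk, G z ≠ 0 := fun z hz => slitPlane_ne_zero (hslit z hz)
  set p : ℂ → ℂ := fun z => (G z)⁻¹ ^ (μ : ℂ) with hp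
  have hslit' : ∀ z ∈ unitDisk, (G z)⁻¹ ∈ slitPlane := fun z hz => by
    have h := hslit z hz
    have hn := normSq_pos.2 (hGne z hz)
    rw [mem_slitPlane_iff] at h ⊢
    rw [inv_re, inv_im]
    rcases h with h | h
    · exact Or.inl (div_pos h hn)
    · exact Or.inr (div_ne_zero (neg_ne_zero.2 h) hn.ne')
  have hpa : AnalyticOnNhd ℂ p unitDisk := fun z hz =>
    ((hGa z hz).inv (hGne z hz)).cpow analyticAt_const (hslit' z hz)
  have hpd : ∀ z ∈ unitDisk, z * deriv p z = μ * k * ((1 - H z / G z) * p z) := by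
    intro z hz
    have hd := (((hGa z hz).differentiableAt.hasDerivAt).inv (hGne z hz)).cpow_const
      (c := (μ : ℂ)) (hslit' z hz)
    have hd' : deriv p z = μ * (G z)⁻¹ ^ ((μ : ℂ) - 1) * (-deriv G z / G z ^ 2) := hd.deriv
    rw [hd', cpow_sub _ _ (inv_ne_zero (hGne z hz)), cpow_one]
    have hrel : z * deriv G z = k * (H z - G z) := aux_G_rel k c hk a ha z hz
    have hg := hGne z hz
    simp only [hp]
    field_simp
    linear_combination (-(1 / G z) ^ (μ : ℂ)) * hrel
  set δ : ℂ := lam₂ / (μ * k) with hδ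
  have hδre : 0 ≤ δ.re := by
    rw [hδ, div_eq_mul_inv, re_ofReal_mul, inv_re]
    exact mul_nonneg hlam2.le (div_nonneg hre (normSq_nonneg _))
  have hΩo : IsOpen (φ '' unitDisk) := aux_image_open φ hφa hφi _ subset_rfl aux_disk_open
  have hpΩ : ∀ z ∈ unitDisk, p z ∈ φ '' unitDisk := by
    refine aux_HR p hpa δ hδre _ hφc hΩo ?_
    intro z hz
    refine ⟨w z, hwm z hz, ?_⟩
    rw [← hJ2 z hz, hpd z hz, hδ]
    simp only [hp]
    field_simp
    ring
  set s : ℝ := lam₁ / lam₂ with hs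
  have hs0 : 0 ≤ s := div_nonneg hlam1 hlam2.le
  have hs1 : s ≤ 1 := (div_le_one hlam2).2 hlam12.le
  set J : ℂ → ℂ := fun z => (1 - s : ℂ) * p z + s * φ (w z) with hJ
  have hJΩ : ∀ z ∈ unitDisk, J z ∈ φ '' unitDisk := by
    intro z hz
    have := hφc (hpΩ z hz) (mem_image_of_mem φ (hwm z hz)) (sub_nonneg.2 hs1) hs0 (by ring)
    simpa [hJ] using this
  have hJa : AnalyticOnNhd ℂ J unitDisk :=
    (analyticOnNhd_const.mul hpa).add (analyticOnNhd_const.mul (hφa.comp hwa hwm))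
  have hJ0 : J 0 = φ 0 := by simp [hJ, hp, hG0, hw0, hφ0]
  refine ⟨fun z => Function.invFunOn φ unitDisk (J z), ?_, ?_, ?_, ?_⟩
  · exact (aux_inv φ hφa hφi).comp hJa hJΩ
  · simp only [hJ0]
    exact hφi.leftInvOn_invFunOn aux_zero_mem
  · intro z hz
    have : Function.invFunOn φ unitDisk (J z) ∈ unitDisk := Function.invFunOn_mem (hJΩ z hz)
    simpa [unitDisk] using this
  · intro z hz
    have e : φ (Function.invFunOn φ unitDisk (J z)) = J z := Function.invFunOn_eq (hJΩ z hz)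
    simp only [e, Real.cos_zero, Real.sin_zero, ofReal_one, ofReal_zero, zero_mul, add_zero,
      one_mul]
    rw [aux_J _ _ _ _ _ ha z hz]
    simp only [hJ]
    rw [← hJ2 z hz]
    have hsl : (s : ℂ) * lam₂ = lam₁ := by
      rw [hs]; push_cast
      have : (lam₂ : ℂ) ≠ 0 := by exact_mod_cast hlam2.ne'
      field_simp
    rw [← hGdef, ← hHdef, ← hsl]
    simp only [hp]
    ring
end
end

section
/- Let 0 < μ < 1, k = p + (b+2)/2 ∉ {0, −1, −2, …} with Re(μk) ≥ 0, let −1 ≤ B₁ ≤ B₂ < A₂ ≤ A₁ ≤ 1, and let 0 ≤ λ₁ < λ₂ be real. Then N_{k,c}^0(λ₂, μ, (1+A₂z)/(1+B₂z)) ⊆ N_{k,c}^0(λ₁, μ, (1+A₁z)/(1+B₁z)). -/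
open Complex Set

noncomputable section

theorem aux_deriv (d : ℕ → ℂ) (hs : ∀ z ∈ unitDisk, Summable fun n => d n * z ^ (n + 1))
    (z : ℂ) (hz : z ∈ unitDisk) :
    HasDerivAt (fun z => ∑' n, d n * z ^ (n + 1)) (∑' n : ℕ, d n * ((n + 1) * z ^ n)) z := by
  have hz1 : ‖z‖ < 1 := by simpa [unitDisk] using hz
  obtain ⟨r, hr, hr1⟩ := exists_between hz1
  obtain ⟨ρ, hρ, hρ1⟩ := exists_between hr1
  have hr0 : 0 < r := lt_of_le_of_lt (norm_nonneg z) hr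
  have hρ0 : 0 < ρ := hr0.trans hρ
  have hsρ := hs (ρ : ℂ) (by simp [unitDisk, abs_of_pos hρ0, hρ1])
  obtain ⟨C, hC⟩ : ∃ C, ∀ n, ‖d n * (ρ : ℂ) ^ (n + 1)‖ ≤ C := by
    have h1 := hsρ.tendsto_atTop_zero.norm
    obtain ⟨C, hC⟩ := h1.bddAbove_range
    exact ⟨C, fun n => hC ⟨n, rfl⟩⟩
  have hq : ‖r / ρ‖ < 1 := by
    rw [Real.norm_of_nonneg (by positivity), div_lt_one hρ0]; exact hρ
  have hu : Summable fun n : ℕ => (C / ρ) * (((n : ℝ) ^ 1 * (r / ρ) ^ n) + (r / ρ) ^ n) :=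
    ((summable_pow_mul_geometric_of_norm_lt_one 1 hq).add
      (summable_geometric_of_norm_lt_one hq)).mul_left _
  refine hasDerivAt_tsum_of_isPreconnected (g := fun n z => d n * z ^ (n + 1))
    (g' := fun n z => d n * ((n + 1) * z ^ n)) (t := Metric.ball (0 : ℂ) r) (y₀ := z)
    hu Metric.isOpen_ball (convex_ball _ _).isPreconnected ?_ ?_ ?_ ?_ ?_
  · intro n y _
    have := (hasDerivAt_pow (n + 1) y).const_mul (d n)
    simpa using this
  · intro n y hy
    have hy' : ‖y‖ ≤ r := by
      have : ‖y‖ < r := by simpa using hy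
      exact this.le
    have h1 : ‖d n‖ * ρ ^ (n + 1) ≤ C := by
      have := hC n
      rwa [norm_mul, norm_pow, Complex.norm_real, Real.norm_of_nonneg hρ0.le] at this
    have h2 : ‖d n‖ ≤ C / ρ ^ (n + 1) := by
      rw [le_div_iff₀ (by positivity)]; exact h1
    have h3 : ‖((n : ℂ) + 1)‖ = (n : ℝ) + 1 := by
      have : ((n : ℂ) + 1) = ((n + 1 : ℕ) : ℂ) := by push_cast; rfl
      rw [this, Complex.norm_natCast]; push_cast; rfl
    have hC0 : 0 ≤ C := (norm_nonneg _).trans (hC 0)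
    calc ‖d n * ((n + 1) * y ^ n)‖ = ‖d n‖ * (((n : ℝ) + 1) * ‖y‖ ^ n) := by
          rw [norm_mul, norm_mul, norm_pow, h3]
      _ ≤ C / ρ ^ (n + 1) * (((n : ℝ) + 1) * r ^ n) := by gcongr
      _ = _ := by rw [div_pow, pow_succ]; field_simp; try ring
  · simpa using hr
  · exact hs z hz
  · simpa using hr

theorem aux_poch (k : ℂ) (n : ℕ) : k * poch (k + 1) n = poch k n * (k + n) := by
  induction n with
  | zero => simp [poch]
  | succ n ih =>
    have e1 : poch (k + 1) (n + 1) = poch (k + 1) n * (k + 1 + n) := by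
      simp [poch, Finset.prod_range_succ]
    have e2 : poch k (n + 1) = poch k n * (k + n) := by
      simp [poch, Finset.prod_range_succ]
    rw [e1, e2, ← mul_assoc, ih]; push_cast; ring

theorem aux_poch_ne (k : ℂ) (hk : NotNonposInt k) (n : ℕ) : poch k n ≠ 0 := by
  unfold poch
  rw [Finset.prod_ne_zero_iff]
  intro i _ h
  exact hk i (by linear_combination h)

theorem aux_poch_lower (k : ℂ) (hk : 0 ≤ k.re) (m : ℕ) :
    ‖k‖ * (m.factorial : ℝ) ≤ ‖poch k (m + 1)‖ := by
  induction m with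
  | zero => simp [poch]
  | succ n ih =>
    have e2 : poch k (n + 1 + 1) = poch k (n + 1) * (k + (n + 1 : ℕ)) := by
      simp [poch, Finset.prod_range_succ]
    have h : ((n + 1 : ℕ) : ℝ) ≤ ‖k + (n + 1 : ℕ)‖ := by
      refine le_trans ?_ (Complex.re_le_norm _)
      rw [Complex.add_re, Complex.natCast_re]; linarith
    rw [e2, norm_mul, Nat.factorial_succ]
    calc ‖k‖ * (((n + 1) * n.factorial : ℕ) : ℝ)
        = (‖k‖ * n.factorial) * ((n + 1 : ℕ) : ℝ) := by push_cast; ring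
      _ ≤ _ := by gcongr

theorem aux_poch_half (m : ℕ) : 1 ≤ ‖poch (3 / 2) m‖ := by
  induction m with
  | zero => simp [poch]
  | succ n ih =>
    have e2 : poch (3/2) (n + 1) = poch (3/2) n * (3/2 + (n : ℂ)) := by
      simp [poch, Finset.prod_range_succ]
    have h : 1 ≤ ‖(3/2 : ℂ) + n‖ := by
      refine le_trans ?_ (Complex.re_le_norm _)
      have : ((3/2 : ℂ) + n).re = 3/2 + n := by
        rw [Complex.add_re, Complex.natCast_re]; norm_num
      rw [this]
      have := Nat.cast_nonneg (α := ℝ) n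
      linarith
    rw [e2, norm_mul]
    nlinarith

/-- coefficients -/
def dco (k c : ℂ) (a : ℕ → ℂ) (n : ℕ) : ℂ :=
  (-c / 4) ^ (n + 1) / (poch (3 / 2) (n + 1) * poch k (n + 1)) * a (n + 2)

/-- `S_k f / z` -/
def Hfun (k c : ℂ) (a : ℕ → ℂ) (z : ℂ) : ℂ := 1 + ∑' n, dco k c a n * z ^ (n + 1)

theorem struve_eq (k c : ℂ) (a : ℕ → ℂ) (z : ℂ) : struveOp k c a z = z * Hfun k c a z := by
  unfold struveOp Hfun dco
  rw [mul_add, mul_one, ← tsum_mul_left]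
  congr 1
  refine tsum_congr fun n => ?_
  ring

theorem Hfun_zero (k c : ℂ) (a : ℕ → ℂ) : Hfun k c a 0 = 1 := by
  simp [Hfun]

theorem dco_summable (k c : ℂ) (a : ℕ → ℂ) (ha : InA a) (hk0 : k ≠ 0) (hk : 0 ≤ k.re)
    (z : ℂ) (hz : z ∈ unitDisk) : Summable fun n => dco k c a n * z ^ (n + 1) := by
  by_cases h0 : z = 0
  · subst h0; simpa using summable_zero
  have hs := (summable_nat_add_iff 2).2 (ha.2.2 z hz)
  have hs' := (hs.norm.mul_left (‖-c/4‖ * Real.exp ‖-c/4‖ / ‖k‖ / ‖z‖))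
  refine Summable.of_norm_bounded hs' fun n => ?_
  have hkp : 0 < ‖k‖ := norm_pos_iff.2 hk0
  have hzp : 0 < ‖z‖ := norm_pos_iff.2 h0
  have h1 := aux_poch_lower k hk n
  have h2 := aux_poch_half (n + 1)
  have h3 : ‖-c/4‖ ^ n / n.factorial ≤ Real.exp ‖-c/4‖ :=
    Real.pow_div_factorial_le_exp _ (norm_nonneg _) n
  have hf : (0 : ℝ) < n.factorial := by positivity
  have hb : ‖(-c / 4) ^ (n + 1) / (poch (3 / 2) (n + 1) * poch k (n + 1))‖ ≤
      ‖-c/4‖ * Real.exp ‖-c/4‖ / ‖k‖ := by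
    rw [norm_div, norm_mul, norm_pow]
    calc ‖-c / 4‖ ^ (n + 1) / (‖poch (3 / 2) (n + 1)‖ * ‖poch k (n + 1)‖)
        ≤ ‖-c / 4‖ ^ (n + 1) / (1 * (‖k‖ * n.factorial)) := by gcongr
      _ = ‖-c/4‖ * (‖-c/4‖ ^ n / n.factorial) / ‖k‖ := by
          rw [pow_succ]; generalize ‖-c/4‖ = x; field_simp
      _ ≤ _ := by gcongr
  unfold dco
  rw [norm_mul, norm_mul]
  calc _ ≤ (‖-c/4‖ * Real.exp ‖-c/4‖ / ‖k‖) * ‖a (n + 2)‖ * ‖z ^ (n + 1)‖ := by gcongr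
    _ = _ := by 
        rw [norm_mul, norm_pow, norm_pow]; generalize ‖-c/4‖ = x; field_simp; try ring

theorem dco_rel (k c : ℂ) (a : ℕ → ℂ) (hk : NotNonposInt k) (hk1 : NotNonposInt (k + 1)) (n : ℕ) :
    dco (k + 1) c a n * (n + 1) = k * (dco k c a n - dco (k + 1) c a n) := by
  have h := aux_poch k (n + 1)
  have n1 := aux_poch_ne k hk (n + 1)
  have n2 := aux_poch_ne (k + 1) hk1 (n + 1)
  have n3 : poch (3/2) (n + 1) ≠ 0 := by
    intro h; have := aux_poch_half (n + 1); rw [h] at this; simp at this; linarith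
  push_cast at h
  unfold dco
  generalize (-c / 4) ^ (n + 1) = x
  field_simp
  linear_combination (-x * a (n+2)) * h

theorem Hfun_deriv (k c : ℂ) (a : ℕ → ℂ) (ha : InA a) (hk : NotNonposInt k) (hkr : 0 ≤ k.re)
    (z : ℂ) (hz : z ∈ unitDisk) :
    ∃ H' : ℂ, HasDerivAt (Hfun (k + 1) c a) H' z ∧
      z * H' = k * (Hfun k c a z - Hfun (k + 1) c a z) := by
  have hk0 : k ≠ 0 := by simpa using hk 0
  have hk1r : 0 ≤ (k + 1).re := by simp; linarith
  have hk10 : k + 1 ≠ 0 := by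
    intro h; have := congrArg Complex.re h; simp at this; linarith
  have hk1 : NotNonposInt (k + 1) := by
    intro n h
    exact hk (n + 1) (by push_cast; linear_combination h)
  refine ⟨_, (aux_deriv _ (dco_summable (k + 1) c a ha hk10 hk1r) z hz).const_add 1, ?_⟩
  unfold Hfun
  rw [add_sub_add_left_eq_sub, ← Summable.tsum_sub (dco_summable k c a ha hk0 hkr z hz)
    (dco_summable (k + 1) c a ha hk10 hk1r z hz), ← tsum_mul_left, ← tsum_mul_left]
  refine tsum_congr fun n => ?_
  linear_combination z ^ (n + 1) * dco_rel k c a hk hk1 n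

/-- the quadratic defining function of the Janowski domain -/
def Gq (A B : ℝ) (ζ : ℂ) : ℝ := ‖(A : ℂ) - B * ζ‖ ^ 2 - ‖ζ - 1‖ ^ 2

theorem Gq_eq (A B : ℝ) (ζ : ℂ) :
    Gq A B ζ = (A^2 - 1) + 2 * (1 - A * B) * ζ.re - (1 - B^2) * (ζ.re ^ 2 + ζ.im ^ 2) := by
  unfold Gq
  rw [← Complex.normSq_eq_norm_sq, ← Complex.normSq_eq_norm_sq, Complex.normSq_apply,
    Complex.normSq_apply]
  simp
  ring

/-- supporting functional -/
theorem Gq_support (A B : ℝ) (hB : B ^ 2 ≤ 1) (ζ : ℂ) :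
    ∃ V : ℂ, ∀ η : ℂ, Gq A B (ζ + η) ≤ Gq A B ζ + (V * η).re := by
  refine ⟨⟨2 * (1 - A * B) - 2 * (1 - B^2) * ζ.re, 2 * (1 - B^2) * ζ.im⟩, fun η => ?_⟩
  rw [Gq_eq, Gq_eq]
  simp
  nlinarith [mul_nonneg (sub_nonneg.2 hB) (add_nonneg (sq_nonneg η.re) (sq_nonneg η.im))]

theorem Gq_convex (A B : ℝ) (hB : B ^ 2 ≤ 1) (x y : ℂ) (t : ℝ) (h0 : 0 ≤ t) (h1 : t ≤ 1)
    (hx : 0 < Gq A B x) (hy : 0 < Gq A B y) :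
    0 < Gq A B (x + t * (y - x)) := by
  obtain ⟨V, hV⟩ := Gq_support A B hB (x + t * (y - x))
  have e1 := hV (x - (x + t * (y - x)))
  have e2 := hV (y - (x + t * (y - x)))
  rw [add_sub_cancel] at e1 e2
  have e3 : (V * (x - (x + t * (y - x)))).re = - t * (V * (y - x)).re := by
    have : V * (x - (x + t * (y - x))) = ((-t : ℝ) : ℂ) * (V * (y - x)) := by push_cast; ring
    rw [this, Complex.re_ofReal_mul]
  have e4 : (V * (y - (x + t * (y - x)))).re = (1 - t) * (V * (y - x)).re := by
    have : V * (y - (x + t * (y - x))) = ((1 - t : ℝ) : ℂ) * (V * (y - x)) := by push_cast; ring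
    rw [this, Complex.re_ofReal_mul]
  rw [e3] at e1
  rw [e4] at e2
  by_contra hn
  push Not at hn
  rcases le_total 0 (V * (y - x)).re with h | h <;> nlinarith

theorem Gq_cont (A B : ℝ) : Continuous (Gq A B) := by
  unfold Gq; fun_prop

/-- Hallenbeck and Ruscheweyh for Janowski domains -/
theorem HR (A B : ℝ) (hB : B ^ 2 ≤ 1) (hAB : B < A) (P P' : ℂ → ℂ) (γ : ℂ) (hγ : 0 ≤ γ.re)
    (hP : ∀ z ∈ unitDisk, HasDerivAt P (P' z) z) (hP0 : P 0 = 1)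
    (h : ∀ z ∈ unitDisk, 0 < Gq A B (P z + γ * (z * P' z))) :
    ∀ z ∈ unitDisk, 0 < Gq A B (P z) := by
  by_contra hcon
  push Not at hcon
  obtain ⟨z1, hz1, hg1⟩ := hcon
  have hz1' : ‖z1‖ < 1 := by simpa [unitDisk] using hz1
  have hsub : Metric.closedBall (0 : ℂ) ‖z1‖ ⊆ unitDisk := Metric.closedBall_subset_ball hz1'
  have hc : ContinuousOn (fun z => Gq A B (P z)) (Metric.closedBall (0 : ℂ) ‖z1‖) :=
    (Gq_cont A B).comp_continuousOn
      fun z hz => (hP z (hsub hz)).continuousAt.continuousWithinAt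
  have hK : IsCompact (Metric.closedBall (0 : ℂ) ‖z1‖ ∩ (fun z => Gq A B (P z)) ⁻¹' Set.Iic 0) :=
    (isCompact_closedBall _ _).of_isClosed_subset
      (hc.preimage_isClosed_of_isClosed Metric.isClosed_closedBall isClosed_Iic)
      Set.inter_subset_left
  obtain ⟨z0, ⟨hz0, hg0⟩, hmin⟩ := hK.exists_isMinOn ⟨z1, by simp, hg1⟩
    (f := fun z : ℂ => ‖z‖) continuous_norm.continuousOn
  have hz0n : ‖z0‖ ≤ ‖z1‖ := by simpa using hz0
  have hg0' : Gq A B (P z0) ≤ 0 := hg0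
  have hz0D : z0 ∈ unitDisk := hsub hz0
  have hpos : ∀ z : ℂ, ‖z‖ < ‖z0‖ → 0 < Gq A B (P z) := by
    intro z hz
    by_contra hn
    push Not at hn
    have := hmin (show z ∈ _ from ⟨by simpa using (hz.le.trans hz0n), hn⟩)
    have h' : ‖z0‖ ≤ ‖z‖ := this
    linarith
  obtain ⟨V, hV⟩ := Gq_support A B hB (P z0)
  have hLpos : ∀ z : ℂ, ‖z‖ < ‖z0‖ → 0 < (V * (P z - P z0)).re := by
    intro z hz
    have h1 := hpos z hz
    have h2 := hV (P z - P z0)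
    rw [add_sub_cancel] at h2
    linarith
  have hz0ne : z0 ≠ 0 := by
    rintro rfl
    rw [hP0] at hg0'
    unfold Gq at hg0'
    have : ((A : ℂ) - B * 1) = ((A - B : ℝ) : ℂ) := by push_cast; ring
    rw [this, Complex.norm_real] at hg0'
    have : 0 < ‖A - B‖ := norm_pos_iff.2 (by linarith)
    simp at hg0'
    linarith
  -- directional derivatives
  have hdir : ∀ v : ℂ, v.re < 0 → 0 ≤ (V * (P' z0 * (z0 * v))).re := by
    intro v hv
    have hline : HasDerivAt (fun s : ℝ => z0 + (s : ℂ) * (z0 * v)) (z0 * v) 0 := by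
      have := ((Complex.ofRealCLM.hasDerivAt (x := (0 : ℝ))).mul_const (z0 * v)).const_add z0
      simpa using this
    have hd : HasDerivAt (fun s : ℝ => V * (P (z0 + (s : ℂ) * (z0 * v)) - P z0))
        (V * (P' z0 * (z0 * v))) 0 := by
      have hPz : HasDerivAt P (P' z0) (z0 + ((0 : ℝ) : ℂ) * (z0 * v)) := by
        simpa using hP z0 hz0D
      exact ((hPz.comp (0 : ℝ) hline).sub_const (P z0)).const_mul V
    have hre : HasDerivAt (fun s : ℝ => (V * (P (z0 + (s : ℂ) * (z0 * v)) - P z0)).re)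
        (V * (P' z0 * (z0 * v))).re 0 := by
      have := Complex.reCLM.hasFDerivAt.comp_hasDerivAt (0 : ℝ) hd
      exact this
    have ht := hre.tendsto_slope_zero_right
    refine ge_of_tendsto ht ?_
    have hvn : 0 < Complex.normSq v := Complex.normSq_pos.2 (by rintro rfl; simp at hv)
    have hlt : (0 : ℝ) < -2 * v.re / Complex.normSq v := by
      apply div_pos <;> linarith
    filter_upwards [Ioo_mem_nhdsGT hlt] with s hs
    have hs2 : s * Complex.normSq v < -2 * v.re := (lt_div_iff₀ hvn).1 hs.2
    have hn : ‖z0 + (s : ℂ) * (z0 * v)‖ < ‖z0‖ := by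
      have e : z0 + (s : ℂ) * (z0 * v) = z0 * (1 + s * v) := by ring
      rw [e, norm_mul]
      have : ‖1 + (s : ℂ) * v‖ < 1 := by
        have h2 : ‖1 + (s : ℂ) * v‖ ^ 2 < 1 := by
          rw [← Complex.normSq_eq_norm_sq, Complex.normSq_apply]
          rw [Complex.normSq_apply] at hs2
          simp
          nlinarith [hs.1, mul_lt_mul_of_pos_left hs2 hs.1]
        nlinarith [norm_nonneg (1 + (s : ℂ) * v)]
      have h3 := norm_pos_iff.2 hz0ne
      nlinarith
    have := hLpos _ hn
    simp only [zero_add, smul_eq_mul]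
    have hs1 := hs.1
    simp only [Complex.ofReal_zero, zero_mul, add_zero, sub_self, mul_zero, Complex.zero_re,
      sub_zero]
    positivity
  have hle : (V * (γ * (z0 * P' z0))).re ≤ 0 := by
    have hE : ∀ ε : ℝ, 0 < ε → (V * (γ * (z0 * P' z0))).re ≤ 0 + ε * (-(V * (z0 * P' z0)).re) := by
      intro ε hε
      have := hdir (-γ - ε) (by simp; linarith)
      have e : V * (P' z0 * (z0 * (-γ - ε))) =
        -(V * (γ * (z0 * P' z0))) - (ε : ℂ) * (V * (z0 * P' z0)) := by ring
      rw [e, Complex.sub_re, Complex.re_ofReal_mul, Complex.neg_re] at this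
      linarith
    have ht : Filter.Tendsto (fun ε : ℝ => 0 + ε * (-(V * (z0 * P' z0)).re))
        (nhdsWithin 0 (Set.Ioi 0)) (nhds (0 + 0 * (-(V * (z0 * P' z0)).re))) := by
      apply Filter.Tendsto.mono_left _ nhdsWithin_le_nhds
      exact Continuous.tendsto (by fun_prop) 0
    have := ge_of_tendsto ht (by
      filter_upwards [self_mem_nhdsWithin] with ε hε
      exact hE ε hε)
    simpa using this
  have h1 := h z0 hz0D
  have h2 := hV (γ * (z0 * P' z0))
  linarith

theorem Gq_image (A B : ℝ) (hB : -1 ≤ B) (hAB : B < A) (hA : A ≤ 1) (w : ℂ) (hw : ‖w‖ < 1) :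
    1 + (B : ℂ) * w ≠ 0 ∧ 0 < Gq A B ((1 + (A : ℂ) * w) / (1 + (B : ℂ) * w)) := by
  have hne : 1 + (B : ℂ) * w ≠ 0 := by
    intro h
    have h1 : (B : ℂ) * w = -1 := by linear_combination h
    have h2 : ‖(B : ℂ) * w‖ = 1 := by rw [h1]; simp
    rw [norm_mul, Complex.norm_real] at h2
    have h3 : ‖B‖ ≤ 1 := abs_le.2 ⟨hB, by linarith⟩
    nlinarith [norm_nonneg w, norm_nonneg B]
  refine ⟨hne, ?_⟩
  unfold Gq
  have e1 : (A : ℂ) - B * ((1 + (A : ℂ) * w) / (1 + (B : ℂ) * w)) =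
      ((A - B : ℝ) : ℂ) / (1 + B * w) := by
    push_cast; field_simp; ring
  have e2 : (1 + (A : ℂ) * w) / (1 + (B : ℂ) * w) - 1 = ((A - B : ℝ) : ℂ) * w / (1 + B * w) := by
    rw [eq_div_iff hne, sub_mul, div_mul_cancel₀ _ hne]; push_cast; ring
  rw [e1, e2, norm_div, norm_div, norm_mul, Complex.norm_real, sub_pos]
  have h1 : 0 < ‖A - B‖ := norm_pos_iff.2 (by linarith)
  have h2 := norm_pos_iff.2 hne
  have h3 := norm_nonneg w
  gcongr
  nlinarith

theorem Gq_norm_lt (A B : ℝ) (ζ : ℂ) (h : 0 < Gq A B ζ) : ‖ζ - 1‖ < ‖(A : ℂ) - B * ζ‖ := by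
  unfold Gq at h
  exact lt_of_pow_lt_pow_left₀ 2 (norm_nonneg _) (by linarith)

theorem Gq_inv (A B : ℝ) (hAB : B < A) (ζ : ℂ) (h : 0 < Gq A B ζ) :
    (A : ℂ) - B * ζ ≠ 0 ∧ ‖(ζ - 1) / ((A : ℂ) - B * ζ)‖ < 1 ∧
    ζ = (1 + (A : ℂ) * ((ζ - 1) / ((A : ℂ) - B * ζ))) / (1 + (B : ℂ) * ((ζ - 1) / ((A : ℂ) - B * ζ))) := by
  have h1 := Gq_norm_lt A B ζ h
  have hne : (A : ℂ) - B * ζ ≠ 0 := by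
    intro h0; rw [h0] at h1; simp at h1; linarith [norm_nonneg (ζ - 1)]
  have h2 := norm_pos_iff.2 hne
  refine ⟨hne, ?_, ?_⟩
  · rw [norm_div, div_lt_one h2]; exact h1
  · have hAB' : (A : ℂ) - B ≠ 0 := by
      rw [← Complex.ofReal_sub]; exact_mod_cast (sub_pos.2 hAB).ne'
    have e1 : 1 + (A : ℂ) * ((ζ - 1) / ((A : ℂ) - B * ζ)) = ((A : ℂ) - B) * ζ / (A - B * ζ) := by
      rw [eq_div_iff hne, add_mul, mul_assoc, div_mul_cancel₀ _ hne]; ring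
    have e2 : 1 + (B : ℂ) * ((ζ - 1) / ((A : ℂ) - B * ζ)) = ((A : ℂ) - B) / (A - B * ζ) := by
      rw [eq_div_iff hne, add_mul, mul_assoc, div_mul_cancel₀ _ hne]; ring
    rw [e1, e2, div_div_div_cancel_right₀ hne, mul_div_cancel_left₀ _ hAB']

theorem Gq_mono (A₁ A₂ B₁ B₂ : ℝ)
    (hB1 : -1 ≤ B₁) (hB12 : B₁ ≤ B₂) (hBA2 : B₂ < A₂) (hA21 : A₂ ≤ A₁) (hA1 : A₁ ≤ 1)
    (ζ : ℂ) (h : 0 < Gq A₂ B₂ ζ) : 0 < Gq A₁ B₁ ζ := by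
  obtain ⟨_, hw, he⟩ := Gq_inv A₂ B₂ hBA2 ζ h
  set w := (ζ - 1) / ((A₂ : ℂ) - B₂ * ζ)
  have hne := (Gq_image A₂ B₂ (by linarith) hBA2 (by linarith) w hw).1
  have e1 : (A₁ : ℂ) - B₁ * ζ =
      (((A₁ - B₁ : ℝ) : ℂ) + ((A₁ * B₂ - A₂ * B₁ : ℝ) : ℂ) * w) / (1 + B₂ * w) := by
    rw [he, eq_div_iff hne, sub_mul, mul_assoc, div_mul_cancel₀ _ hne]; push_cast; ring
  have e2 : ζ - 1 = ((A₂ - B₂ : ℝ) : ℂ) * w / (1 + B₂ * w) := by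
    rw [he, eq_div_iff hne, sub_mul, div_mul_cancel₀ _ hne]; push_cast; ring
  unfold Gq
  rw [e1, e2, norm_div, norm_div, sub_pos]
  have h2 := norm_pos_iff.2 hne
  have key : ‖((A₂ - B₂ : ℝ) : ℂ) * w‖ <
      ‖((A₁ - B₁ : ℝ) : ℂ) + ((A₁ * B₂ - A₂ * B₁ : ℝ) : ℂ) * w‖ := by
    have t := norm_sub_le_norm_add ((A₁ - B₁ : ℝ) : ℂ) (((A₁ * B₂ - A₂ * B₁ : ℝ) : ℂ) * w)
    rw [norm_mul, Complex.norm_real, Complex.norm_real, Real.norm_of_nonneg (by linarith : 0 ≤ A₁ - B₁)] at t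
    rw [norm_mul, Complex.norm_real, Real.norm_of_nonneg (by linarith : 0 ≤ A₂ - B₂)]
    have hs : (A₂ - B₂) + ‖A₁ * B₂ - A₂ * B₁‖ ≤ A₁ - B₁ := by
      have : ‖A₁ * B₂ - A₂ * B₁‖ ≤ (A₁ - B₁) - (A₂ - B₂) := by
        rw [Real.norm_eq_abs, abs_le]
        constructor
        · nlinarith [mul_nonneg (sub_nonneg.2 hA21) (by linarith : 0 ≤ 1 + B₂),
            mul_nonneg (sub_nonneg.2 hB12) (by linarith : 0 ≤ 1 + A₂)]
        · nlinarith [mul_nonneg (sub_nonneg.2 hA21) (by linarith : 0 ≤ 1 - B₂),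
            mul_nonneg (sub_nonneg.2 hB12) (by linarith : 0 ≤ 1 - A₂)]
      linarith
    have hp : 0 < A₂ - B₂ := by linarith
    nlinarith [norm_nonneg w, norm_nonneg (A₁ * B₂ - A₂ * B₁)]
  gcongr

theorem J_eq (lam : ℂ) (μ : ℝ) (k c : ℂ) (a : ℕ → ℂ) (z : ℂ) :
    Jfun 0 lam μ (struveOp k c a) (struveOp (k + 1) c a) z =
      (Hfun (k + 1) c a z)⁻¹ ^ (μ : ℂ) * (1 + lam * (1 - Hfun k c a z / Hfun (k + 1) c a z)) := by
  unfold Jfun ratioPow ratioQ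
  by_cases h0 : z = 0
  · subst h0; simp [Hfun_zero]
  · have e1 : z / struveOp (k + 1) c a z = (Hfun (k + 1) c a z)⁻¹ := by
      rw [struve_eq, ← div_div, div_self h0, one_div]
    have e2 : struveOp k c a z / struveOp (k + 1) c a z = Hfun k c a z / Hfun (k + 1) c a z := by
      rw [struve_eq, struve_eq, mul_div_mul_left _ _ h0]
    simp only [h0, if_false, e1, e2]
    simp
    ring

/-- the inclusion
`N_{k,c}^0(λ₂, μ, (1+A₂z)/(1+B₂z)) ⊆ N_{k,c}^0(λ₁, μ, (1+A₁z)/(1+B₁z))`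
for `-1 ≤ B₁ ≤ B₂ < A₂ ≤ A₁ ≤ 1` and `0 ≤ λ₁ < λ₂`. -/
theorem classN_inclusion_janowski (μ : ℝ) (k c : ℂ) (A₁ A₂ B₁ B₂ lam₁ lam₂ : ℝ)
    (hμ0 : 0 < μ) (hμ1 : μ < 1)
    (hk : NotNonposInt k) (hre : 0 ≤ ((μ : ℂ) * k).re)
    (hB1 : -1 ≤ B₁) (hB12 : B₁ ≤ B₂) (hBA2 : B₂ < A₂) (hA21 : A₂ ≤ A₁) (hA1 : A₁ ≤ 1)
    (hlam1 : 0 ≤ lam₁) (hlam12 : lam₁ < lam₂) :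
    ∀ a : ℕ → ℂ, InA a →
      memN 0 (lam₂ : ℂ) μ k c
          (fun z => (1 + (A₂ : ℂ) * z) / (1 + (B₂ : ℂ) * z)) a →
        memN 0 (lam₁ : ℂ) μ k c
          (fun z => (1 + (A₁ : ℂ) * z) / (1 + (B₁ : ℂ) * z)) a := by
  intro a ha hmem
  have hk0 : k ≠ 0 := by simpa using hk 0
  have hkr : 0 ≤ k.re := by
    rw [Complex.re_ofReal_mul] at hre
    exact nonneg_of_mul_nonneg_right hre hμ0
  have hlam2 : 0 < lam₂ := by linarith
  have hlamC : (lam₂ : ℂ) ≠ 0 := by exact_mod_cast hlam2.ne'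
  have hμC : (μ : ℂ) ≠ 0 := by exact_mod_cast hμ0.ne'
  have hopen : IsOpen unitDisk := Metric.isOpen_ball
  have h0D : (0 : ℂ) ∈ unitDisk := by simp [unitDisk]
  obtain ⟨w, hwa, hw0, hw1, hJ⟩ := hmem
  have hJ' : ∀ z ∈ unitDisk, (Hfun (k + 1) c a z)⁻¹ ^ (μ : ℂ) *
      (1 + (lam₂ : ℂ) * (1 - Hfun k c a z / Hfun (k + 1) c a z)) =
      (1 + (A₂ : ℂ) * w z) / (1 + (B₂ : ℂ) * w z) := by
    intro z hz
    rw [← J_eq, hJ z hz]; simp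
  have himg : ∀ z ∈ unitDisk, 1 + (B₂ : ℂ) * w z ≠ 0 ∧
      0 < Gq A₂ B₂ ((1 + (A₂ : ℂ) * w z) / (1 + (B₂ : ℂ) * w z)) := fun z hz =>
    Gq_image A₂ B₂ (by linarith) hBA2 (by linarith) (w z) (hw1 z hz)
  have hB2 : B₂ ^ 2 ≤ 1 := by nlinarith
  -- the value never vanishes
  have hJne : ∀ z ∈ unitDisk, (Hfun (k + 1) c a z)⁻¹ ^ (μ : ℂ) *
      (1 + (lam₂ : ℂ) * (1 - Hfun k c a z / Hfun (k + 1) c a z)) ≠ 0 := by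
    intro z hz h
    have := (himg z hz).2
    rw [← hJ' z hz, h, Gq_eq] at this
    simp at this
    have h2 : |A₂| ≤ 1 := abs_le.2 ⟨by linarith, by linarith⟩
    linarith
  have hHne : ∀ z ∈ unitDisk, Hfun (k + 1) c a z ≠ 0 := by
    intro z hz h
    apply hJne z hz
    rw [h, inv_zero, Complex.zero_cpow hμC, zero_mul]
  have hqne : ∀ z ∈ unitDisk,
      1 + (lam₂ : ℂ) * (1 - Hfun k c a z / Hfun (k + 1) c a z) ≠ 0 :=
    fun z hz => right_ne_zero_of_mul (hJne z hz)
  -- differentiability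
  have hder := Hfun_deriv k c a ha hk hkr
  have hHd : DifferentiableOn ℂ (Hfun (k + 1) c a) unitDisk := fun z hz => by
    obtain ⟨_, h, _⟩ := hder z hz
    exact h.differentiableAt.differentiableWithinAt
  have hHkd : DifferentiableOn ℂ (Hfun k c a) unitDisk := fun z hz =>
    ((aux_deriv _ (dco_summable k c a ha hk0 hkr) z hz).const_add
      1).differentiableAt.differentiableWithinAt
  have hwd : DifferentiableOn ℂ w unitDisk := hwa.differentiableOn
  set P : ℂ → ℂ := fun z => (Hfun (k + 1) c a z)⁻¹ ^ (μ : ℂ) with hPdef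
  have hPd : DifferentiableOn ℂ P unitDisk := by
    have hd : DifferentiableOn ℂ (fun z => (1 + (A₂ : ℂ) * w z) / (1 + (B₂ : ℂ) * w z) /
        (1 + (lam₂ : ℂ) * (1 - Hfun k c a z / Hfun (k + 1) c a z))) unitDisk := by
      refine DifferentiableOn.div (DifferentiableOn.div ?_ ?_ fun z hz => (himg z hz).1) ?_ hqne
      · exact (hwd.const_mul _).const_add _
      · exact (hwd.const_mul _).const_add _
      · exact (((hHkd.div hHd hHne).const_sub _).const_mul _).const_add _
    refine hd.congr fun z hz => ?_
    rw [eq_div_iff (hqne z hz)]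
    exact hJ' z hz
  have hPan : AnalyticOnNhd ℂ P unitDisk := hPd.analyticOnNhd hopen
  have hHan : AnalyticOnNhd ℂ (Hfun (k + 1) c a) unitDisk := hHd.analyticOnNhd hopen
  have hP0 : P 0 = 1 := by simp [hPdef, Hfun_zero]
  have hode : Set.EqOn (fun z => deriv P z * Hfun (k + 1) c a z)
      (fun z => -(μ : ℂ) * (deriv (Hfun (k + 1) c a) z * P z)) unitDisk := by
    refine AnalyticOnNhd.eqOn_of_preconnected_of_eventuallyEq (hPan.deriv.mul hHan)
      (analyticOnNhd_const.mul (hHan.deriv.mul hPan)) (convex_ball _ _).isPreconnected h0D ?_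
    have hc : ContinuousAt (fun z => (Hfun (k + 1) c a z)⁻¹) 0 :=
      ((hHan 0 h0D).continuousAt).inv₀ (hHne 0 h0D)
    have hs : ∀ᶠ z in nhds (0 : ℂ), (Hfun (k + 1) c a z)⁻¹ ∈ slitPlane := by
      refine hc.eventually_mem (isOpen_slitPlane.mem_nhds ?_)
      simp [Hfun_zero]
    filter_upwards [hs, hopen.mem_nhds h0D] with z hz hzD
    have hH := (hHan z hzD).differentiableAt.hasDerivAt
    have hne := hHne z hzD
    have hd := (hH.inv hne).cpow_const (c := (μ : ℂ)) hz
    have hd' : deriv P z = _ := hd.deriv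
    rw [hd', Pi.inv_apply, Complex.cpow_sub _ _ (inv_ne_zero hne), Complex.cpow_one]
    simp only [hPdef]
    field_simp
  have hPeq : ∀ z ∈ unitDisk, z * deriv P z =
      μ * k * (P z * (1 - Hfun k c a z / Hfun (k + 1) c a z)) := by
    intro z hz
    obtain ⟨H', hH', hr⟩ := hder z hz
    have h1 := hode hz
    simp only [hH'.deriv] at h1
    have hne := hHne z hz
    apply mul_right_cancel₀ hne
    have e : 1 - Hfun k c a z / Hfun (k + 1) c a z =
      (Hfun (k + 1) c a z - Hfun k c a z) / Hfun (k + 1) c a z := by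
      rw [sub_div, div_self hne]
    rw [e]
    have e2 : (μ : ℂ) * k * (P z * ((Hfun (k + 1) c a z - Hfun k c a z) / Hfun (k + 1) c a z)) *
      Hfun (k + 1) c a z = μ * k * P z * (Hfun (k + 1) c a z - Hfun k c a z) := by
      field_simp
    rw [e2]
    linear_combination z * h1 - μ * P z * hr
  have hJlam : ∀ lam : ℂ, ∀ z ∈ unitDisk,
      Jfun 0 lam μ (struveOp k c a) (struveOp (k + 1) c a) z =
        P z + (lam / (μ * k)) * (z * deriv P z) := by
    intro lam z hz
    rw [J_eq, hPeq z hz]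
    change P z * _ = _
    generalize 1 - Hfun k c a z / Hfun (k + 1) c a z = q
    field_simp
  have hG2 : ∀ z ∈ unitDisk, 0 < Gq A₂ B₂ (P z + ((lam₂ : ℂ) / (μ * k)) * (z * deriv P z)) := by
    intro z hz
    rw [← hJlam _ z hz, J_eq, hJ' z hz]
    exact (himg z hz).2
  have hγ : 0 ≤ ((lam₂ : ℂ) / (μ * k)).re := by
    have e : (lam₂ : ℂ) / (μ * k) = ((lam₂ / μ : ℝ) : ℂ) * k⁻¹ := by
      push_cast; field_simp
    rw [e, Complex.re_ofReal_mul, Complex.inv_re]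
    have := Complex.normSq_nonneg k
    positivity
  have hGP := HR A₂ B₂ hB2 hBA2 P (deriv P) _ hγ
    (fun z hz => (hPan z hz).differentiableAt.hasDerivAt) hP0 hG2
  set J : ℂ → ℂ := Jfun 0 (lam₁ : ℂ) μ (struveOp k c a) (struveOp (k + 1) c a) with hJdef
  have hG1 : ∀ z ∈ unitDisk, 0 < Gq A₁ B₁ (J z) := by
    intro z hz
    apply Gq_mono A₁ A₂ B₁ B₂ hB1 hB12 hBA2 hA21 hA1
    have := Gq_convex A₂ B₂ hB2 _ _ (lam₁ / lam₂) (by positivity)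
      ((div_le_one hlam2).2 hlam12.le) (hGP z hz) (hG2 z hz)
    convert this using 1
    rw [hJdef, hJlam _ z hz]
    congr 1
    push_cast
    rw [add_sub_cancel_left]
    congr 1
    generalize z * deriv P z = x
    field_simp
  have hJan : AnalyticOnNhd ℂ J unitDisk := by
    have : DifferentiableOn ℂ (fun z => P z + ((lam₁ : ℂ) / (μ * k)) * (z * deriv P z)) unitDisk :=
      hPd.add ((differentiableOn_id.mul hPan.deriv.differentiableOn).const_mul _)
    exact (this.congr fun z hz => hJlam _ z hz).analyticOnNhd hopen
  have hAB1 : B₁ < A₁ := by linarith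
  refine ⟨fun z => (J z - 1) / ((A₁ : ℂ) - B₁ * J z), ?_, ?_, ?_, ?_⟩
  · exact (hJan.sub analyticOnNhd_const).div
      (analyticOnNhd_const.sub (analyticOnNhd_const.mul hJan))
      fun z hz => (Gq_inv A₁ B₁ hAB1 _ (hG1 z hz)).1
  · have : J 0 = 1 := by rw [hJdef, hJlam _ 0 h0D, hP0]; simp
    simp [this]
  · exact fun z hz => (Gq_inv A₁ B₁ hAB1 _ (hG1 z hz)).2.1
  · intro z hz
    have := (Gq_inv A₁ B₁ hAB1 _ (hG1 z hz)).2.2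
    simpa using this
end
end
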